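/- Let d ≥ 2 be an integer, let μ be the normalized Haar probability measure on U(d), and let Γ(X) = Σ_{i=1}^r K_i X K_iᴴ be a Kraus channel on d×d matrices (so Σ_i K_iᴴ K_i = I). Set q = (Σ_{i=1}^r |tr(K_i)|² − 1)/(d² − 1). Then for every d×d complex matrix X, ∫_{U(d)} Uᴴ Γ(U X Uᴴ) U dμ(U) = q·X + (1−q)·(tr(X)/d)·I. (Haar twirling of a quantum channel yields a depolarizing channel whose parameter is determined by the entanglement fidelity.) -/

import Mathlib

open MeasureTheory Matrix

attribute [local instance] Matrix.normedAddCommGroup Matrix.normedSpace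

noncomputable instance {n : Type*} [Fintype n] [DecidableEq n] :
    MeasurableSpace (Matrix.unitaryGroup n ℂ) := borel _

instance {n : Type*} [Fintype n] [DecidableEq n] :
    BorelSpace (Matrix.unitaryGroup n ℂ) := ⟨rfl⟩

/-! Averaging over Haar measure produces a map `T` that commutes with every unitary conjugation.
If `E` is a rank-one projection, then `T(E)` commutes with every unitary commuting with `E`, so
`T(E) = aE + bI`, with `a` and `b` independent of `E` because all rank-one projections are
unitarily conjugate. By the spectral theorem these projections span the matrix space, hence
`T(X) = aX + b tr(X) I`. Twirling changes neither `tr Φ(I)` nor the trace of `Φ` as an operator on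
matrices, and these two numbers determine `a` and `b`; the operator trace of `X ↦ K X Kᴴ` is
`|tr K|²`. -/

section CompactGroupTwirl

lemma isMulRightInvariant_of_isHaarMeasure_of_isProbabilityMeasure {G : Type*} [Group G]
    [TopologicalSpace G] [IsTopologicalGroup G] [LocallyCompactSpace G] [MeasurableSpace G]
    [BorelSpace G] (μ : Measure G) [μ.IsHaarMeasure] [IsProbabilityMeasure μ] :
    μ.IsMulRightInvariant where
  map_mul_right_eq_self g :=
    have : IsProbabilityMeasure (μ.map (· * g)) :=
      Measure.isProbabilityMeasure_map (measurable_mul_const g).aemeasurable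
    Measure.isHaarMeasure_eq_of_isProbabilityMeasure _ _

variable {G E : Type*} [Group G] [NormedAddCommGroup E] [NormedSpace ℂ E]
  [FiniteDimensional ℂ E]

lemma continuous_conj_representation [TopologicalSpace G] [IsTopologicalGroup G]
    {ρ : Representation ℂ G E} (hρ : ∀ x, Continuous fun g => ρ g x) (Φ : Module.End ℂ E) :
    Continuous fun g => LinearMap.toContinuousLinearMap (ρ g⁻¹ * Φ * ρ g) := by
  have hρ' : Continuous fun g => LinearMap.toContinuousLinearMap (ρ g) :=
    continuous_clm_apply.mpr hρ
  have hΦ : Continuous (LinearMap.toContinuousLinearMap Φ) := map_continuous _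
  refine continuous_clm_apply.mpr fun x => ?_
  exact (hρ'.comp continuous_inv).clm_apply (hΦ.comp (hρ x))

variable [MeasurableSpace G]

/-- The twirl `∫ ρ(g)⁻¹ Φ ρ(g) dμ(g)` of an operator `Φ` over a representation `ρ`. The integral is
taken among continuous linear maps, since `E →ₗ[ℂ] E` carries no norm. -/
noncomputable def twirl (μ : Measure G) (ρ : Representation ℂ G E) (Φ : Module.End ℂ E) :
    Module.End ℂ E :=
  (∫ g, LinearMap.toContinuousLinearMap (ρ g⁻¹ * Φ * ρ g) ∂μ : E →L[ℂ] E)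

variable [TopologicalSpace G] [IsTopologicalGroup G] [CompactSpace G] [BorelSpace G]
  (μ : Measure G) [IsFiniteMeasure μ]
  {ρ : Representation ℂ G E} (hρ : ∀ x, Continuous fun g => ρ g x) (Φ : Module.End ℂ E)

include hρ

lemma map_twirl {F : Type*} [NormedAddCommGroup F] [NormedSpace ℂ F] [CompleteSpace F]
    (L : Module.End ℂ E →ₗ[ℂ] F) : L (twirl μ ρ Φ) = ∫ g, L (ρ g⁻¹ * Φ * ρ g) ∂μ := by
  have hint : Integrable (fun g => LinearMap.toContinuousLinearMap (ρ g⁻¹ * Φ * ρ g)) μ :=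
    (continuous_conj_representation hρ Φ).integrable_of_hasCompactSupport
      (HasCompactSupport.of_compactSpace _)
  let L' : (E →L[ℂ] E) →ₗ[ℂ] F := L ∘ₗ LinearMap.toContinuousLinearMap.symm.toLinearMap
  exact (L'.toContinuousLinearMap.integral_comp_comm hint).symm

lemma twirl_apply (x : E) : twirl μ ρ Φ x = ∫ g, ρ g⁻¹ (Φ (ρ g x)) ∂μ :=
  map_twirl μ hρ Φ (LinearMap.applyₗ x)

lemma commute_twirl [μ.IsMulRightInvariant] (h : G) : Commute (ρ h) (twirl μ ρ Φ) := by
  ext x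
  calc ρ h (twirl μ ρ Φ x)
      = ∫ g, ρ h (ρ g⁻¹ (Φ (ρ g x))) ∂μ := map_twirl μ hρ Φ (ρ h ∘ₗ LinearMap.applyₗ x)
    _ = ∫ g, ρ h (ρ (g * h)⁻¹ (Φ (ρ (g * h) x))) ∂μ := (integral_mul_right_eq_self _ h).symm
    _ = ∫ g, ρ g⁻¹ (Φ (ρ g (ρ h x))) ∂μ := by simp
    _ = twirl μ ρ Φ (ρ h x) := (twirl_apply μ hρ Φ _).symm

lemma trace_twirl (μ : Measure G) [IsProbabilityMeasure μ] :
    LinearMap.trace ℂ E (twirl μ ρ Φ) = LinearMap.trace ℂ E Φ := by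
  have htrace (g : G) : LinearMap.trace ℂ E (ρ g⁻¹ * Φ * ρ g) = LinearMap.trace ℂ E Φ := by
    rw [LinearMap.trace_mul_cycle, ← map_mul, mul_inv_cancel, map_one, one_mul]
  simp [map_twirl μ hρ, htrace]

lemma map_twirl_apply_of_invariant (μ : Measure G) [IsProbabilityMeasure μ] {τ : E →ₗ[ℂ] ℂ}
    {x : E} (hτ : ∀ g y, τ (ρ g y) = τ y) (hx : ∀ g, ρ g x = x) : τ (twirl μ ρ Φ x) = τ (Φ x) := by
  simpa [hτ, hx] using map_twirl μ hρ Φ (τ ∘ₗ LinearMap.applyₗ x)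

end CompactGroupTwirl

section UnitaryConjugation

variable {n : Type*} [Fintype n] [DecidableEq n]

instance {𝕜 : Type*} [RCLike 𝕜] : CompactSpace (unitaryGroup n 𝕜) := by
  have hclosed : IsClosed (unitary (Matrix n n 𝕜) : Set (Matrix n n 𝕜)) := isClosed_unitary
  refine isCompact_iff_compactSpace.mp (Metric.isCompact_of_isClosed_isBounded hclosed ?_)
  refine (Metric.isBounded_closedBall (x := 0) (r := 1)).subset fun U hU => ?_
  rw [mem_closedBall_zero_iff, norm_le_iff zero_le_one]
  exact entry_norm_bound_of_unitary hU

/-- The representation of the unitary group on matrices by conjugation, `X ↦ U X Uᴴ`. -/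
def unitaryConj : Representation ℂ (unitaryGroup n ℂ) (Matrix n n ℂ) where
  toFun U := LinearMap.mulLeftRight ℂ ((U : Matrix n n ℂ), (U : Matrix n n ℂ)ᴴ)
  map_one' := by ext1 X; simp
  map_mul' U V := by ext1 X; simp [mul_assoc]

lemma unitaryConj_apply (U : unitaryGroup n ℂ) (X : Matrix n n ℂ) :
    unitaryConj U X = U * X * (U : Matrix n n ℂ)ᴴ := rfl

lemma unitaryConj_inv_apply (U : unitaryGroup n ℂ) (X : Matrix n n ℂ) :
    unitaryConj U⁻¹ X = (U : Matrix n n ℂ)ᴴ * X * U := by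
  simp [unitaryConj_apply, star_eq_conjTranspose]

lemma continuous_unitaryConj_apply (X : Matrix n n ℂ) :
    Continuous fun U : unitaryGroup n ℂ => unitaryConj U X := by
  simp only [unitaryConj_apply]
  fun_prop

lemma unitaryConj_one (U : unitaryGroup n ℂ) : unitaryConj U 1 = 1 := by
  simp [unitaryConj_apply, ← star_eq_conjTranspose]

lemma trace_unitaryConj (U : unitaryGroup n ℂ) (X : Matrix n n ℂ) :
    (unitaryConj U X).trace = X.trace := by
  rw [unitaryConj_apply, trace_mul_cycle, ← star_eq_conjTranspose]
  simp

lemma unitaryConj_eq_self_iff {U : unitaryGroup n ℂ} {X : Matrix n n ℂ} :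
    unitaryConj U X = X ↔ Commute (U : Matrix n n ℂ) X := by
  rw [commute_unitary_iff_star_right_conjugate U.2]
  rfl

lemma swap_mem_unitaryGroup {R : Type*} [CommRing R] [StarRing R] (i j : n) :
    swap R i j ∈ unitaryGroup n R := by
  simp [mem_unitaryGroup_iff, star_eq_conjTranspose, swap_mul_self]

lemma swap_mul_single {R m : Type*} [Semiring R] [DecidableEq m] (i j k : n) (l : m) (c : R) :
    swap R i j * single k l c = single (Equiv.swap i j k) l c := by
  ext a b
  simp [swap, PEquiv.toMatrix_toPEquiv_mul, single_apply, Equiv.swap_apply_eq_iff]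

lemma single_mul_swap {R m : Type*} [Semiring R] [DecidableEq m] (i j k : n) (l : m) (c : R) :
    single l k c * swap R i j = single l (Equiv.swap i j k) c := by
  ext a b
  simp [swap, PEquiv.mul_toMatrix_toPEquiv, single_apply, Equiv.swap_apply_eq_iff]

lemma isStarProjection_single {R : Type*} [Semiring R] [StarRing R] (i : n) :
    IsStarProjection (single i i (1 : R)) where
  isIdempotentElem := by simp [IsIdempotentElem]
  isSelfAdjoint := by simp [IsSelfAdjoint, star_eq_conjTranspose]

/- The reflections `2 Eₖₖ - 1` commute with `Eᵢᵢ` and force the off-diagonal entries of `A` to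
vanish; the transpositions fixing `i` then make the diagonal entries away from `i` equal. -/
lemma exists_eq_smul_single_add_smul_one {R : Type*} [CommRing R] [StarRing R] [NoZeroDivisors R]
    [CharZero R] {A : Matrix n n R} {i : n}
    (hA : ∀ U ∈ unitaryGroup n R, Commute U (single i i 1) → Commute U A) :
    ∃ a b : R, A = a • single i i 1 + b • 1 := by
  have hoffdiag (k l : n) (hkl : k ≠ l) : A k l = 0 := by
    have hreflection : Commute (2 * single k k (1 : R) - 1) (single i i 1) := by
      refine ((Commute.ofNat_left 2 _).mul_left ?_).sub_left (Commute.one_left _)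
      rw [← diagonal_single, ← diagonal_single]
      exact commute_diagonal _ _
    have hcomm := hA _ (isStarProjection_single k).two_mul_sub_one_mem_unitary hreflection
    have hentry : A k l = -A k l := by
      simpa [two_mul, sub_mul, add_mul, mul_sub, mul_add, hkl.symm] using congr_fun₂ hcomm.eq k l
    exact self_eq_neg.mp hentry
  have hdiag (k l : n) (hk : i ≠ k) (hl : i ≠ l) : A k k = A l l := by
    have hswap : Commute (swap R k l) (single i i 1) := by
      rw [commute_iff_eq, swap_mul_single, single_mul_swap, Equiv.swap_apply_of_ne_of_ne hk hl]
    simpa using (congr_fun₂ (hA _ (swap_mem_unitaryGroup k l) hswap).eq k l).symm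
  obtain ⟨b, hb⟩ : ∃ b, ∀ k, i ≠ k → A k k = b := by
    by_cases h : ∃ k, i ≠ k
    · exact ⟨_, fun k hk => hdiag k h.choose hk h.choose_spec⟩
    · exact ⟨0, fun k hk => (h ⟨k, hk⟩).elim⟩
  refine ⟨A i i - b, b, ?_⟩
  ext k l
  obtain rfl | hkl := eq_or_ne k l
  · obtain rfl | hk := eq_or_ne i k
    · simp
    · simp [hk, hb k hk]
  · have : ¬ (i = k ∧ i = l) := by grind
    simp [this, hkl, hoffdiag k l hkl]

lemma span_range_unitaryConj_single (i : n) :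
    Submodule.span ℂ (Set.range fun U => unitaryConj U (single i i 1)) = ⊤ := by
  rw [eq_top_iff, ← span_selfAdjoint, Submodule.span_le]
  intro X (hX : X.IsHermitian)
  rw [hX.spectral_theorem, Unitary.conjStarAlgAut_apply, ← sum_single_eq_diagonal, Finset.mul_sum,
    Finset.sum_mul]
  refine sum_mem fun k _ => ?_
  have hk : hX.eigenvectorUnitary * single k k (hX.eigenvalues k : ℂ)
      * star (hX.eigenvectorUnitary : Matrix n n ℂ) = (hX.eigenvalues k : ℂ) •
        unitaryConj (hX.eigenvectorUnitary * ⟨swap ℂ i k, swap_mem_unitaryGroup i k⟩)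
          (single i i 1) := by
    rw [map_mul, Module.End.mul_apply, unitaryConj_apply _ (single i i 1), conjTranspose_swap,
      swap_mul_single, single_mul_swap, Equiv.swap_apply_left, ← map_smul, smul_single,
      smul_eq_mul, mul_one]
    rfl
  exact hk ▸ Submodule.smul_mem _ _ (Submodule.subset_span ⟨_, rfl⟩)

/-- The map `X ↦ q X + p (tr X / N) I` on `N × N` matrices; for `p = 1 - q` this is the
depolarizing channel with parameter `q`. -/
noncomputable def depolarizing (n : Type*) [Fintype n] [DecidableEq n] (q p : ℂ) :
    Module.End ℂ (Matrix n n ℂ) :=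
  q • 1 + p • (traceLinearMap n ℂ ℂ).smulRight ((Fintype.card n : ℂ)⁻¹ • 1)

lemma depolarizing_apply (q p : ℂ) (X : Matrix n n ℂ) :
    depolarizing n q p X = q • X + p • ((X.trace / Fintype.card n) • (1 : Matrix n n ℂ)) := by
  simp [depolarizing, smul_smul, div_eq_mul_inv]

lemma trace_depolarizing [Nonempty n] (q p : ℂ) :
    LinearMap.trace ℂ _ (depolarizing n q p) = q * Fintype.card n ^ 2 + p := by
  simp [depolarizing, LinearMap.trace_smulRight, Module.finrank_matrix, sq]

lemma trace_depolarizing_one [Nonempty n] (q p : ℂ) :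
    (depolarizing n q p 1).trace = (q + p) * Fintype.card n := by
  simp [depolarizing_apply, add_mul]

theorem exists_eq_depolarizing [Nonempty n] {Φ : Module.End ℂ (Matrix n n ℂ)}
    (hΦ : ∀ U, Commute (unitaryConj U) Φ) : ∃ q p : ℂ, Φ = depolarizing n q p := by
  have i := Classical.arbitrary n
  have hcov U X : unitaryConj U (Φ X) = Φ (unitaryConj U X) := congr($(hΦ U) X)
  obtain ⟨a, b, hab⟩ : ∃ a b : ℂ, Φ (single i i 1) = a • single i i 1 + b • 1 := by
    refine exists_eq_smul_single_add_smul_one fun U hU hcomm => ?_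
    lift U to unitaryGroup n ℂ using hU
    rw [← unitaryConj_eq_self_iff] at hcomm ⊢
    rw [hcov, hcomm]
  refine ⟨a, b * Fintype.card n,
    LinearMap.ext_on_range (span_range_unitaryConj_single i) fun U => ?_⟩
  rw [← hcov, hab, map_add, map_smul, map_smul, depolarizing_apply]
  simp [trace_unitaryConj, unitaryConj_one, smul_smul]

end UnitaryConjugation

section Kraus

variable {n : Type*} [Fintype n]

lemma trace_mulLeftRight {R : Type*} [CommRing R] (A B : Matrix n n R) :
    LinearMap.trace R _ (LinearMap.mulLeftRight R (A, B)) = A.trace * B.trace := by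
  classical
  have hentry (i j : n) : (A * stdBasis R n n (i, j) * B) i j = A i i * B j j := by
    simp [stdBasis_eq_single, mul_apply, single_apply, ite_and]
  calc LinearMap.trace R _ (LinearMap.mulLeftRight R (A, B))
      = ∑ ij : n × n, (A * stdBasis R n n ij * B) ij.1 ij.2 :=
        (LinearMap.trace_eq_matrix_trace R (stdBasis R n n) _).trans <|
          Finset.sum_congr rfl fun _ _ => LinearMap.toMatrix_apply ..
    _ = ∑ i, ∑ j, A i i * B j j := by simp only [Fintype.sum_prod_type, hentry]
    _ = A.trace * B.trace := (Finset.sum_mul_sum ..).symm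

/-- The completely positive map `Γ(X) = ∑ᵢ Kᵢ X Kᵢᴴ` with Kraus operators `Kᵢ`. -/
def krausMap {ι : Type*} [Fintype ι] (K : ι → Matrix n n ℂ) : Module.End ℂ (Matrix n n ℂ) :=
  ∑ i, LinearMap.mulLeftRight ℂ (K i, (K i)ᴴ)

variable {ι : Type*} [Fintype ι] (K : ι → Matrix n n ℂ)

lemma krausMap_apply (X : Matrix n n ℂ) : krausMap K X = ∑ i, K i * X * (K i)ᴴ := by
  simp [krausMap]

lemma trace_krausMap :
    LinearMap.trace ℂ _ (krausMap K) = ∑ i, (‖(K i).trace‖ : ℂ) ^ 2 := by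
  simp [krausMap, trace_mulLeftRight, trace_conjTranspose, Complex.mul_conj']

lemma trace_krausMap_apply (X : Matrix n n ℂ) :
    (krausMap K X).trace = ((∑ i, (K i)ᴴ * K i) * X).trace := by
  simp only [krausMap_apply, trace_sum, Finset.sum_mul, trace_mul_cycle (K _)]

end Kraus

theorem haar_twirl_channel_general {n : Type*} [Fintype n] [DecidableEq n] [Nontrivial n]
    (μ : Measure (unitaryGroup n ℂ)) [μ.IsHaarMeasure] [IsProbabilityMeasure μ]
    (Φ : Matrix n n ℂ →ₗ[ℂ] Matrix n n ℂ) {τ q : ℂ} (hτ : τ = (Φ 1).trace / Fintype.card n)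
    (hq : q = (LinearMap.trace ℂ _ Φ - τ) / ((Fintype.card n : ℂ) ^ 2 - 1)) (X : Matrix n n ℂ) :
    ∫ U, (U : Matrix n n ℂ)ᴴ * Φ (U * X * (U : Matrix n n ℂ)ᴴ) * (U : Matrix n n ℂ) ∂μ =
      q • X + (τ - q) • ((X.trace / Fintype.card n) • (1 : Matrix n n ℂ)) := by
  have := isMulRightInvariant_of_isHaarMeasure_of_isProbabilityMeasure μ
  obtain ⟨a, p, hap⟩ := exists_eq_depolarizing (commute_twirl μ continuous_unitaryConj_apply Φ)
  have hN : (Fintype.card n : ℂ) ≠ 0 := by simp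
  have hN' : (Fintype.card n : ℂ) ^ 2 - 1 ≠ 0 :=
    sub_ne_zero.mpr (by exact_mod_cast (Nat.one_lt_pow two_ne_zero Fintype.one_lt_card).ne')
  have hp : a + p = τ := by
    rw [hτ, eq_div_iff hN, ← trace_depolarizing_one, ← hap]
    exact map_twirl_apply_of_invariant continuous_unitaryConj_apply Φ μ (τ := traceLinearMap n ℂ ℂ)
      trace_unitaryConj unitaryConj_one
  have htrace : a * Fintype.card n ^ 2 + p = LinearMap.trace ℂ _ Φ := by
    rw [← trace_depolarizing, ← hap, trace_twirl continuous_unitaryConj_apply]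
  obtain rfl : a = q := by
    rw [hq, eq_div_iff hN']
    linear_combination htrace - hp
  rw [← hp, add_sub_cancel_left, ← depolarizing_apply, ← hap,
    twirl_apply μ continuous_unitaryConj_apply]
  simp_rw [unitaryConj_inv_apply, unitaryConj_apply]

/-- **Haar twirling of a quantum channel yields a depolarizing channel.**
For a Kraus channel `Γ(X) = Σᵢ Kᵢ X Kᵢᴴ` with `Σᵢ Kᵢᴴ Kᵢ = I` and
`q = (Σᵢ |tr Kᵢ|² − 1)/(d² − 1)`:
`∫ Uᴴ Γ(U X Uᴴ) U dμ(U) = q·X + (1−q)·(tr X / d)·I`. -/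
theorem haar_twirl_channel (d : ℕ) (hd : 2 ≤ d)
    (μ : Measure (Matrix.unitaryGroup (Fin d) ℂ))
    [μ.IsHaarMeasure] [IsProbabilityMeasure μ]
    (r : ℕ) (K : Fin r → Matrix (Fin d) (Fin d) ℂ)
    (hK : ∑ i, (K i)ᴴ * K i = 1)
    (q : ℝ) (hq : q = ((∑ i, ‖(K i).trace‖ ^ 2) - 1) / ((d : ℝ) ^ 2 - 1)) :
    ∀ X : Matrix (Fin d) (Fin d) ℂ,
      (∫ U, (U : Matrix (Fin d) (Fin d) ℂ)ᴴ *
          (∑ i, K i * ((U : Matrix (Fin d) (Fin d) ℂ) * X *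
            (U : Matrix (Fin d) (Fin d) ℂ)ᴴ) * (K i)ᴴ) *
          (U : Matrix (Fin d) (Fin d) ℂ) ∂μ)
        = (q : ℂ) • X +
          ((1 : ℂ) - (q : ℂ)) • ((X.trace / (d : ℂ)) • (1 : Matrix (Fin d) (Fin d) ℂ)) := by
  have : Nontrivial (Fin d) := Fin.nontrivial_iff_two_le.mpr hd
  intro X
  have hτ : 1 = (krausMap K 1).trace / Fintype.card (Fin d) := by
    simp [trace_krausMap_apply, hK, show d ≠ 0 by lia]
  have hq' : (q : ℂ) =
      (LinearMap.trace ℂ _ (krausMap K) - 1) / ((Fintype.card (Fin d) : ℂ) ^ 2 - 1) := by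
    simp [hq, trace_krausMap]
  simpa [krausMap_apply] using haar_twirl_channel_general μ (krausMap K) hτ hq' X
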